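/- arXiv:2507.18891 — 6 statements merged into one kernel-verified Lean document; each statement's English description precedes it below -/
import Mathlib

section
/- Let G be a finite simple graph on a vertex set V that is bipartite (i.e., G admits a proper 2-coloring). Then the vertex–edge incidence matrix of G, with entries in ℚ (entry (v, e) equal to 1 if vertex v is an endpoint of edge e and 0 otherwise), is totally unimodular: every square submatrix has determinant 0, 1, or −1. -/
open Finset

/-- A square `0`-`1` matrix whose rows are coloured with two colours so that each column has at most
one nonzero entry in the rows of each colour has determinant `0`, `1` or `-1`. -/
theorem Matrix.det_mem_of_two_coloured_rows {R : Type*} [CommRing R] [IsDomain R] {k : ℕ}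
    (A : Matrix (Fin k) (Fin k) R) (c : Fin k → Bool) (hA : ∀ i j, A i j = 0 ∨ A i j = 1)
    (hc : ∀ i i' j, c i = c i' → A i j ≠ 0 → A i' j ≠ 0 → i = i') :
    A.det ∈ ({0, 1, -1} : Set R) := by
  induction k with
  | zero => simp
  | succ k ih =>
    by_cases hfull : ∀ j b, ∃ i, c i = b ∧ A i j ≠ 0
    · left
      refine Matrix.exists_vecMul_eq_zero_iff.mp ⟨fun i => if c i then 1 else -1, ?_, ?_⟩
      · intro h
        have h0 := congrFun h 0
        by_cases hc0 : c 0 <;> simp [hc0] at h0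
      · ext j
        obtain ⟨p, hp, hpj⟩ := hfull j true
        obtain ⟨q, hq, hqj⟩ := hfull j false
        have hpq : p ≠ q := by
          rintro rfl
          simp [hp] at hq
        have hzero : ∀ i, i ≠ p ∧ i ≠ q → (if c i then (1 : R) else -1) * A i j = 0 := by
          rintro i ⟨hip, hiq⟩
          have hij : A i j = 0 := by
            by_contra hij
            cases hci : c i
            · exact hiq (hc i q j (hci.trans hq.symm) hij hqj)
            · exact hip (hc i p j (hci.trans hp.symm) hij hpj)
          rw [hij, mul_zero]
        simp only [Matrix.vecMul, dotProduct]
        rw [Fintype.sum_eq_add p q hpq hzero]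
        simp [hp, hq, (hA p j).resolve_left hpj, (hA q j).resolve_left hqj]
    · push Not at hfull
      obtain ⟨j, b, hb⟩ := hfull
      obtain ⟨p, hp⟩ : ∃ p, ∀ i, i ≠ p → A i j = 0 := by
        by_cases hcol : ∃ p, A p j ≠ 0
        · obtain ⟨p, hpj⟩ := hcol
          refine ⟨p, fun i hip => ?_⟩
          by_contra hij
          have hi : c i ≠ b := fun h => hij (hb i h)
          have hp : c p ≠ b := fun h => hpj (hb p h)
          exact hip (hc i p j ((Bool.eq_not_of_ne hi).trans (Bool.eq_not_of_ne hp).symm) hij hpj)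
        · push Not at hcol
          exact ⟨0, fun i _ => hcol i⟩
      have hminor : (A.submatrix p.succAbove j.succAbove).det ∈ ({0, 1, -1} : Set R) :=
        ih _ (c ∘ p.succAbove) (fun _ _ => hA _ _) fun i i' _ hcc hi hi' =>
          Fin.succAbove_right_injective (hc _ _ _ hcc hi hi')
      rw [Matrix.det_succ_column A j, Fintype.sum_eq_single p fun i hip => by simp [hp i hip]]
      simp only [Set.mem_insert_iff, Set.mem_singleton_iff] at hminor ⊢
      rcases neg_one_pow_eq_or R (p + j : ℕ) with hs | hs <;>
      rcases hA p j with ha | ha <;>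
      rcases hminor with hd | hd | hd <;>
      simp [hs, ha, hd]

/-- **Total unimodularity of the incidence matrix of a bipartite graph.**
For a finite simple bipartite graph `G`, every square submatrix of the
vertex–edge incidence matrix (over `ℚ`) has determinant `0`, `1`, or `-1`. -/
theorem bipartite_incidence_totally_unimodular
    {V : Type*} [Fintype V] [DecidableEq V]
    (G : SimpleGraph V) [DecidableRel G.Adj]
    (hbip : ∃ c : V → Bool, ∀ u v : V, G.Adj u v → c u ≠ c v)
    (k : ℕ) (f : Fin k → V) (g : Fin k → {e : Sym2 V // e ∈ G.edgeFinset})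
    (hf : Function.Injective f) (hg : Function.Injective g) :
    ((Matrix.of fun (v : V) (e : {e : Sym2 V // e ∈ G.edgeFinset}) =>
        if v ∈ (e : Sym2 V) then (1 : ℚ) else 0).submatrix f g).det
      ∈ ({0, 1, -1} : Set ℚ) := by
  obtain ⟨c, hcol⟩ := hbip
  refine Matrix.det_mem_of_two_coloured_rows _ (c ∘ f) (fun i j => ?_) fun i i' j hcc hi hi' => ?_
  · simp only [Matrix.submatrix_apply, Matrix.of_apply]
    split_ifs <;> simp
  · simp only [Matrix.submatrix_apply, Matrix.of_apply, ne_eq, ite_eq_right_iff, one_ne_zero,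
      imp_false, not_not] at hi hi'
    by_contra hne
    have hedge : (g j : Sym2 V) = s(f i, f i') :=
      (Sym2.mem_and_mem_iff (hf.ne hne)).mp ⟨hi, hi'⟩
    have hadj : G.Adj (f i) (f i') := by
      rw [← SimpleGraph.mem_edgeSet, ← hedge]
      exact SimpleGraph.mem_edgeFinset.mp (g j).2
    exact hcol _ _ hadj hcc
end

section
/- Let G = (V, E) be a finite bipartite graph with nonnegative edge weights w : E → ℝ≥0. Then the optimum of the fractional matching linear program equals the maximum weight of an (integral) matching: the maximum of ∑_{e ∈ E} w(e)·x(e) over all x : E → ℝ satisfying x(e) ≥ 0 for all e ∈ E and ∑_{e ∈ E, v ∈ e} x(e) ≤ 1 for every vertex v ∈ V, is equal to the maximum of ∑_{e ∈ M} w(e) over all matchings M of G. -/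
open Finset

section BipartiteMatching

variable {V : Type*} [DecidableEq V] {E : Finset (Sym2 V)} {c : V → Bool}

/-- In a loopless edge set, the edges at `v` are parametrised by the neighbours of `v`. -/
lemma sum_edges_at_eq_sum_neighbors [Fintype V] (hE : ∀ v, s(v, v) ∉ E) (x : Sym2 V → ℝ)
    (v : V) :
    ∑ e ∈ E.filter (fun e => v ∈ e), x e
      = ∑ u ∈ univ.erase v, if s(v, u) ∈ E then x s(v, u) else 0 := by
  rw [← sum_filter]
  symm
  refine sum_nbij (fun u => s(v, u)) ?_ ?_ ?_ (fun _ _ => rfl)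
  · intro u hu
    simp_all
  · intro a _ b _ h
    exact Sym2.congr_right.1 h
  · intro e he
    obtain ⟨heE, hve⟩ := by simpa using he
    obtain ⟨u, rfl⟩ := Sym2.mem_iff_exists.1 hve
    refine ⟨u, ?_, rfl⟩
    have : u ≠ v := by
      rintro rfl
      exact hE _ heE
    simp [this, heE]

/-- In a bipartite graph, every edge has exactly one orientation starting on the `false` side. -/
lemma sum_edges_eq_sum_oriented [Fintype V] (hc : ∀ u v, s(u, v) ∈ E → c u ≠ c v)
    (g : Sym2 V → ℝ) :
    ∑ e ∈ E, g e
      = ∑ u ∈ univ.filter (fun u => c u = false), ∑ v, if s(u, v) ∈ E then g s(u, v) else 0 := by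
  rw [← sum_product', ← sum_filter]
  symm
  refine sum_nbij (fun p => s(p.1, p.2)) ?_ ?_ ?_ (fun _ _ => rfl)
  · intro p hp
    simp_all
  · rintro ⟨a, b⟩ hp ⟨a', b'⟩ hq h
    simp only [coe_filter, mem_product, mem_filter, mem_univ, true_and, and_true,
      Set.mem_ofPred_eq] at hp hq
    rcases Sym2.eq_iff.1 h with ⟨rfl, rfl⟩ | ⟨rfl, rfl⟩
    · rfl
    · exact absurd (hp.1.trans hq.1.symm) (hc _ _ hp.2)
  · intro e he
    induction e using Sym2.ind with
    | _ u v =>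
      have huv := hc u v he
      cases hu : c u with
      | false => exact ⟨(u, v), by simpa [hu] using he, rfl⟩
      | true =>
        have hv : c v = false := by
          simpa [hu] using huv
        exact ⟨(v, u), by simpa [hv, Sym2.eq_swap] using he, Sym2.eq_swap⟩

/-- The matching formed by the edges `s(u, σ u)` of `E` with `u` on the `false` side. -/
def permMatching [Fintype V] (E : Finset (Sym2 V)) (c : V → Bool) (σ : Equiv.Perm V) :
    Finset (Sym2 V) :=
  (univ.filter (fun u => c u = false ∧ s(u, σ u) ∈ E)).image (fun u => s(u, σ u))

lemma permMatching_subset [Fintype V] (σ : Equiv.Perm V) : permMatching E c σ ⊆ E := by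
  intro e he
  obtain ⟨u, hu, rfl⟩ := mem_image.1 he
  exact (mem_filter.1 hu).2.2

lemma permMatching_disjoint [Fintype V] (hc : ∀ u v, s(u, v) ∈ E → c u ≠ c v)
    (σ : Equiv.Perm V) :
    ∀ e ∈ permMatching E c σ, ∀ f ∈ permMatching E c σ, e ≠ f → ∀ x : V, x ∈ e → x ∉ f := by
  intro e he f hf hne x hxe hxf
  obtain ⟨u, hu, rfl⟩ := mem_image.1 he
  obtain ⟨v, hv, rfl⟩ := mem_image.1 hf
  obtain ⟨-, hu, huE⟩ := mem_filter.1 hu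
  obtain ⟨-, hv, hvE⟩ := mem_filter.1 hv
  have hcu := hc _ _ huE
  have hcv := hc _ _ hvE
  have huv : u ≠ v := by
    rintro rfl
    exact hne rfl
  rcases Sym2.mem_iff.1 hxe with rfl | rfl <;> rcases Sym2.mem_iff.1 hxf with h | h
  · exact huv h
  · rw [← h] at hcv
    exact hcv (hv.trans hu.symm)
  · rw [h] at hcu
    exact hcu (hu.trans hv.symm)
  · exact huv (σ.injective h)

lemma sum_permMatching [Fintype V] (hc : ∀ u v, s(u, v) ∈ E → c u ≠ c v)
    (w : Sym2 V → ℝ) (σ : Equiv.Perm V) :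
    ∑ e ∈ permMatching E c σ, w e
      = ∑ u ∈ univ.filter (fun u => c u = false),
          if s(u, σ u) ∈ E then w s(u, σ u) else 0 := by
  rw [permMatching, sum_image, ← sum_filter, filter_filter]
  intro a ha b hb h
  simp only [coe_filter, mem_univ, true_and, Set.mem_ofPred_eq] at ha hb
  rcases Sym2.eq_iff.1 h with ⟨h, -⟩ | ⟨h, -⟩
  · exact h
  · have := hc _ _ hb.2
    rw [← h] at this
    exact absurd (hb.1.trans ha.1.symm) this

/-- The weight of a matrix, counting the entries indexed by edges oriented from the `false`
side. -/
def orientedWeight [Fintype V] (E : Finset (Sym2 V)) (c : V → Bool) (w : Sym2 V → ℝ) :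
    Matrix V V ℝ →ₗ[ℝ] ℝ where
  toFun A := ∑ u ∈ univ.filter (fun u => c u = false), ∑ v,
    (if s(u, v) ∈ E then w s(u, v) else 0) * A u v
  map_add' A B := by simp [mul_add, sum_add_distrib]
  map_smul' r A := by simp [mul_sum, mul_left_comm]

lemma orientedWeight_permMatrix [Fintype V] (hc : ∀ u v, s(u, v) ∈ E → c u ≠ c v)
    (w : Sym2 V → ℝ) (σ : Equiv.Perm V) :
    orientedWeight E c w (σ.permMatrix ℝ) = ∑ e ∈ permMatching E c σ, w e := by
  rw [sum_permMatching hc]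
  refine sum_congr rfl fun u _ => ?_
  rw [sum_eq_single (σ u)]
  · simp [Equiv.Perm.permMatrix, PEquiv.toMatrix_apply, Equiv.toPEquiv_apply]
  · intro v _ hv
    simp [Equiv.Perm.permMatrix, PEquiv.toMatrix_apply, Equiv.toPEquiv_apply, hv.symm]
  · simp

/-- The symmetric matrix of a fractional matching, with the slack of each vertex on the
diagonal. -/
def slackMatrix (E : Finset (Sym2 V)) (x : Sym2 V → ℝ) : Matrix V V ℝ :=
  fun u v => if u = v then 1 - ∑ e ∈ E.filter (fun e => u ∈ e), x e
    else if s(u, v) ∈ E then x s(u, v) else 0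

lemma slackMatrix_comm (x : Sym2 V → ℝ) (u v : V) :
    slackMatrix E x u v = slackMatrix E x v u := by
  unfold slackMatrix
  by_cases h : u = v
  · rw [h]
  · rw [if_neg h, if_neg (Ne.symm h), Sym2.eq_swap]

lemma slackMatrix_mem_doublyStochastic [Fintype V] (hE : ∀ v, s(v, v) ∉ E)
    {x : Sym2 V → ℝ} (hx : ∀ e ∈ E, 0 ≤ x e)
    (hx1 : ∀ v : V, ∑ e ∈ E.filter (fun e => v ∈ e), x e ≤ 1) :
    slackMatrix E x ∈ doublyStochastic ℝ V := by
  have hrow (u : V) : ∑ v, slackMatrix E x u v = 1 := by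
    rw [← add_sum_erase univ _ (mem_univ u)]
    have : ∑ v ∈ univ.erase u, slackMatrix E x u v
        = ∑ e ∈ E.filter (fun e => u ∈ e), x e := by
      rw [sum_edges_at_eq_sum_neighbors hE]
      refine sum_congr rfl fun v hv => ?_
      rw [slackMatrix, if_neg (ne_of_mem_erase hv).symm]
    rw [this]
    simp [slackMatrix]
  refine mem_doublyStochastic_iff_sum.2 ⟨fun u v => ?_, hrow, fun v => ?_⟩
  · unfold slackMatrix
    split_ifs with h h'
    · linarith [hx1 u]
    · exact hx _ h'
    · exact le_rfl
  · simpa only [slackMatrix_comm x _ v] using hrow v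

lemma orientedWeight_slackMatrix [Fintype V] (hc : ∀ u v, s(u, v) ∈ E → c u ≠ c v)
    (w x : Sym2 V → ℝ) :
    orientedWeight E c w (slackMatrix E x) = ∑ e ∈ E, w e * x e := by
  rw [sum_edges_eq_sum_oriented hc]
  refine sum_congr rfl fun u _ => sum_congr rfl fun v _ => ?_
  by_cases h : s(u, v) ∈ E
  · have : u ≠ v := by
      rintro rfl
      exact hc _ _ h rfl
    simp [slackMatrix, h, this]
  · simp [h]

/-- Every fractional matching of a bipartite graph is dominated in weight by a matching. -/
lemma exists_matching_weight_ge [Fintype V] (hc : ∀ u v, s(u, v) ∈ E → c u ≠ c v)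
    (w : Sym2 V → ℝ) {x : Sym2 V → ℝ} (hx : ∀ e ∈ E, 0 ≤ x e)
    (hx1 : ∀ v : V, ∑ e ∈ E.filter (fun e => v ∈ e), x e ≤ 1) :
    ∃ M ⊆ E, (∀ e ∈ M, ∀ f ∈ M, e ≠ f → ∀ x : V, x ∈ e → x ∉ f) ∧
      ∑ e ∈ E, w e * x e ≤ ∑ e ∈ M, w e := by
  have hA : slackMatrix E x ∈ (doublyStochastic ℝ V : Set (Matrix V V ℝ)) :=
    slackMatrix_mem_doublyStochastic (fun v h => hc v v h rfl) hx hx1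
  rw [doublyStochastic_eq_convexHull_permMatrix] at hA
  obtain ⟨B, ⟨σ, rfl⟩, hσ⟩ := ((orientedWeight E c w).convexOn
    (convex_convexHull ℝ _)).exists_ge_of_mem_convexHull (subset_convexHull ℝ _) hA
  rw [orientedWeight_slackMatrix hc, orientedWeight_permMatrix hc] at hσ
  exact ⟨_, permMatching_subset σ, permMatching_disjoint hc σ, hσ⟩

/-- At most one edge of a matching contains a given vertex. -/
lemma sum_indicator_matching_le_one {M : Finset (Sym2 V)}
    (hM : ∀ e ∈ M, ∀ f ∈ M, e ≠ f → ∀ x : V, x ∈ e → x ∉ f) (v : V) :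
    ∑ e ∈ E.filter (fun e => v ∈ e), (if e ∈ M then (1 : ℝ) else 0) ≤ 1 := by
  rw [← sum_filter, sum_const, nsmul_one]
  refine mod_cast card_le_one.2 fun e he f hf => ?_
  simp only [mem_filter] at he hf
  by_contra hne
  exact hM e he.2 f hf.2 hne v he.1.2 hf.1.2

end BipartiteMatching

/-- **Integrality of the fractional matching LP on bipartite graphs.**
For a finite bipartite graph with nonnegative edge weights, the optimum value of the
fractional matching linear program equals the maximum weight of an integral matching. -/
theorem fractional_matching_lp_eq_matching
    {V : Type*} [Fintype V] [DecidableEq V]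
    (E : Finset (Sym2 V)) (w : Sym2 V → ℝ)
    (hbip : ∃ c : V → Bool, ∀ e ∈ E, ∀ u v : V, e = s(u, v) → c u ≠ c v)
    (hw : ∀ e ∈ E, 0 ≤ w e) :
    sSup {t : ℝ | ∃ x : Sym2 V → ℝ,
        (∀ e ∈ E, 0 ≤ x e) ∧
        (∀ v : V, ∑ e ∈ E.filter (fun e => v ∈ e), x e ≤ 1) ∧
        t = ∑ e ∈ E, w e * x e}
      = sSup {t : ℝ | ∃ M : Finset (Sym2 V), M ⊆ E ∧
          (∀ e ∈ M, ∀ f ∈ M, e ≠ f → ∀ x : V, x ∈ e → x ∉ f) ∧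
          t = ∑ e ∈ M, w e} := by
  obtain ⟨c, hc⟩ := hbip
  replace hc : ∀ u v, s(u, v) ∈ E → c u ≠ c v := fun u v h => hc _ h u v rfl
  set L := {t : ℝ | ∃ x : Sym2 V → ℝ, (∀ e ∈ E, 0 ≤ x e) ∧
    (∀ v : V, ∑ e ∈ E.filter (fun e => v ∈ e), x e ≤ 1) ∧ t = ∑ e ∈ E, w e * x e}
  set I := {t : ℝ | ∃ M : Finset (Sym2 V), M ⊆ E ∧
    (∀ e ∈ M, ∀ f ∈ M, e ≠ f → ∀ x : V, x ∈ e → x ∉ f) ∧ t = ∑ e ∈ M, w e}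
  have hI_bdd : BddAbove I := by
    refine ((Set.finite_range fun M : Finset (Sym2 V) => ∑ e ∈ M, w e).subset ?_).bddAbove
    rintro t ⟨M, -, -, rfl⟩
    exact ⟨M, rfl⟩
  have hI_ne : I.Nonempty := ⟨0, ∅, by simp⟩
  have hIL : I ⊆ L := by
    rintro t ⟨M, hME, hM, rfl⟩
    refine ⟨fun e => if e ∈ M then 1 else 0, fun e _ => by dsimp only; positivity,
      sum_indicator_matching_le_one hM, ?_⟩
    simp [inter_eq_right.2 hME]
  have hL_le : ∀ t ∈ L, t ≤ sSup I := by
    rintro t ⟨x, hx, hx1, rfl⟩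
    obtain ⟨M, hME, hM, hle⟩ := exists_matching_weight_ge hc w hx hx1
    exact hle.trans (le_csSup hI_bdd ⟨M, hME, hM, rfl⟩)
  exact le_antisymm (csSup_le (hI_ne.mono hIL) hL_le) (csSup_le_csSup ⟨_, hL_le⟩ hI_ne hIL)
end

section
/- Let G = (V, E) be a finite graph with nonnegative edge weights w : E → ℝ≥0, and let M be a matching of G with the domination property: for every edge e ∈ E, either e ∈ M or there exists an edge f ∈ M sharing a vertex with e such that w(f) ≥ w(e). Then M is a 1/2-approximate maximum weight matching: for every matching M' of G, 2·∑_{e ∈ M} w(e) ≥ ∑_{e ∈ M'} w(e). (In particular, the matchings produced by the heaviest-edge-first greedy algorithm and by the locally dominant edge algorithm, which both satisfy the domination property, have weight at least half the maximum weight of a matching.) -/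
open Finset

/-- **Dominating matchings are 1/2-approximate.**
If every edge of the graph is either in the matching `M` or shares a vertex with an
edge of `M` of at least its weight, then `M` has at least half the weight of every
matching (in particular of a maximum weight matching). -/
theorem dominating_matching_half_approx
    {V : Type*} [Fintype V] [DecidableEq V]
    (E : Finset (Sym2 V)) (w : Sym2 V → ℝ)
    (hw : ∀ e ∈ E, 0 ≤ w e)
    (M : Finset (Sym2 V)) (hME : M ⊆ E)
    (hmatch : ∀ e ∈ M, ∀ f ∈ M, e ≠ f → ∀ x : V, x ∈ e → x ∉ f)
    (hdom : ∀ e ∈ E, e ∈ M ∨ ∃ f ∈ M, (∃ x : V, x ∈ e ∧ x ∈ f) ∧ w e ≤ w f) :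
    ∀ M' : Finset (Sym2 V), M' ⊆ E →
      (∀ e ∈ M', ∀ f ∈ M', e ≠ f → ∀ x : V, x ∈ e → x ∉ f) →
      ∑ e ∈ M', w e ≤ 2 * ∑ e ∈ M, w e := by
  intro M' hM'E hmatch'
  have hcover : ∀ e ∈ M', ∃ f ∈ M, ∃ x : V, x ∈ e ∧ x ∈ f ∧ w e ≤ w f := by
    intro e he
    rcases hdom e (hM'E he) with heM | ⟨f, hf, ⟨x, hxe, hxf⟩, hle⟩
    · exact ⟨e, heM, _, Sym2.out_fst_mem e, Sym2.out_fst_mem e, le_rfl⟩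
    · exact ⟨f, hf, x, hxe, hxf, hle⟩
  choose! g hgM hshare using hcover
  have hfiber : ∀ f : Sym2 V, #{e ∈ M' | g e = f} ≤ 2 := by
    intro f
    calc #{e ∈ M' | g e = f} ≤ #f.toFinset := by
          refine Finset.card_le_card_of_forall_subsingleton (fun e x => x ∈ e) ?_ ?_
          · intro e he
            obtain ⟨heM, rfl⟩ := Finset.mem_filter.mp he
            obtain ⟨x, hxe, hxg, -⟩ := hshare e heM
            exact ⟨x, Sym2.mem_toFinset.mpr hxg, hxe⟩
          · rintro x - a ⟨ha, hxa⟩ b ⟨hb, hxb⟩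
            by_contra hne
            exact hmatch' a (Finset.mem_filter.mp ha).1 b (Finset.mem_filter.mp hb).1 hne x hxa hxb
      _ ≤ 2 := by
          rw [Sym2.card_toFinset]
          split_ifs <;> omega
  calc ∑ e ∈ M', w e ≤ ∑ e ∈ M', w (g e) :=
        Finset.sum_le_sum fun e he => let ⟨_, _, _, hle⟩ := hshare e he; hle
    _ = ∑ f ∈ M, #{e ∈ M' | g e = f} * w f := by
        rw [← Finset.sum_fiberwise_of_maps_to' hgM w]
        simp
    _ ≤ ∑ f ∈ M, 2 * w f :=
        Finset.sum_le_sum fun f hf =>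
          mul_le_mul_of_nonneg_right (by exact_mod_cast hfiber f) (hw f (hME hf))
    _ = 2 * ∑ e ∈ M, w e := (Finset.mul_sum ..).symm
end

section
/- Let R and S be disjoint finite vertex sets with edge weights w : R × S → ℝ satisfying 0 ≤ w(r,s) ≤ 1 for all r, s. Then every matching M between R and S has weight ∑_{(r,s) ∈ M} w(r,s) ≤ min(|R|, |S|). Consequently, the fuzzy similarity sim_φ(R,S) = W/(|R|+|S|−W), where W is the maximum matching weight, satisfies sim_φ(R,S) ≤ min(|R|,|S|) / max(|R|,|S|); hence if sim_φ(R,S) ≥ δ for some δ ∈ (0,1], then δ·|R| ≤ |S| ≤ |R|/δ (the size filter used in candidate generation). -/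
open Finset

/-- A matching between `R` and `S` has at most `min |R| |S|` edges. -/
theorem card_matching_le_min {α : Type*} {R S : Finset α} {M : Finset (α × α)}
    (hM : M ⊆ R ×ˢ S)
    (hmatch : ∀ p ∈ M, ∀ q ∈ M, p ≠ q → p.1 ≠ q.1 ∧ p.2 ≠ q.2) :
    M.card ≤ min R.card S.card := by
  refine le_min (card_le_card_of_injOn Prod.fst ?_ ?_) (card_le_card_of_injOn Prod.snd ?_ ?_)
  · exact fun p hp => (mem_product.mp (hM hp)).1
  · intro p hp q hq h
    by_contra hne
    exact (hmatch p hp q hq hne).1 h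
  · exact fun p hp => (mem_product.mp (hM hp)).2
  · intro p hp q hq h
    by_contra hne
    exact (hmatch p hp q hq hne).2 h

/-- With weights at most `1`, a matching has weight at most `min |R| |S|`. -/
theorem sum_matching_le_min {α : Type*} {R S : Finset α} {w : α → α → ℝ}
    (hw : ∀ r ∈ R, ∀ s ∈ S, w r s ≤ 1) {M : Finset (α × α)} (hM : M ⊆ R ×ˢ S)
    (hmatch : ∀ p ∈ M, ∀ q ∈ M, p ≠ q → p.1 ≠ q.1 ∧ p.2 ≠ q.2) :
    ∑ p ∈ M, w p.1 p.2 ≤ min (R.card : ℝ) (S.card : ℝ) := by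
  calc ∑ p ∈ M, w p.1 p.2 ≤ ∑ _p ∈ M, (1 : ℝ) := by
        refine sum_le_sum fun p hp => ?_
        have h := mem_product.mp (hM hp)
        exact hw p.1 h.1 p.2 h.2
    _ = (M.card : ℝ) := by simp
    _ ≤ min (R.card : ℝ) (S.card : ℝ) := by
        exact_mod_cast card_matching_le_min hM hmatch

theorem div_add_sub_le_min_div_max {a b W : ℝ} (ha : 0 ≤ a) (hb : 0 ≤ b)
    (hW : W ≤ min a b) : W / (a + b - W) ≤ min a b / max a b := by
  have hden : max a b ≤ a + b - W := by linarith [min_add_max a b]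
  rcases (le_max_of_le_left ha : 0 ≤ max a b).eq_or_lt with hmax | hmax
  · have hW0 : W ≤ 0 := hW.trans (min_le_max.trans hmax.ge)
    rw [← hmax, div_zero]
    exact div_nonpos_of_nonpos_of_nonneg hW0 (by linarith)
  · exact div_le_div₀ (le_min ha hb) hW hmax hden

/-- **Size bound on matching weight and the size filter.**
With weights in `[0,1]` on the complete bipartite graph on disjoint parts `R`, `S`:
every matching has weight at most `min |R| |S|`; consequently, if `W` is the maximum
matching weight, `sim_φ(R,S) = W/(|R|+|S|-W)` is at most `min(|R|,|S|)/max(|R|,|S|)`,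
and `sim_φ(R,S) ≥ δ` with `δ ∈ (0,1]` forces `δ|R| ≤ |S| ≤ |R|/δ`. -/
theorem size_filter_bounds
    {α : Type*} [DecidableEq α]
    (R S : Finset α) (hdisj : Disjoint R S)
    (w : α → α → ℝ) (hw : ∀ r ∈ R, ∀ s ∈ S, 0 ≤ w r s ∧ w r s ≤ 1)
    (W : ℝ)
    (hW : IsGreatest {t : ℝ | ∃ M : Finset (α × α), M ⊆ R ×ˢ S ∧
        (∀ p ∈ M, ∀ q ∈ M, p ≠ q → p.1 ≠ q.1 ∧ p.2 ≠ q.2) ∧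
        t = ∑ p ∈ M, w p.1 p.2} W) :
    (∀ M : Finset (α × α), M ⊆ R ×ˢ S →
        (∀ p ∈ M, ∀ q ∈ M, p ≠ q → p.1 ≠ q.1 ∧ p.2 ≠ q.2) →
        ∑ p ∈ M, w p.1 p.2 ≤ min (R.card : ℝ) (S.card : ℝ)) ∧
    W / ((R.card : ℝ) + (S.card : ℝ) - W)
        ≤ min (R.card : ℝ) (S.card : ℝ) / max (R.card : ℝ) (S.card : ℝ) ∧
    (∀ δ : ℝ, 0 < δ → δ ≤ 1 →
        δ ≤ W / ((R.card : ℝ) + (S.card : ℝ) - W) →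
        δ * (R.card : ℝ) ≤ (S.card : ℝ) ∧ (S.card : ℝ) ≤ (R.card : ℝ) / δ) := by
  have hmatching : ∀ M : Finset (α × α), M ⊆ R ×ˢ S →
      (∀ p ∈ M, ∀ q ∈ M, p ≠ q → p.1 ≠ q.1 ∧ p.2 ≠ q.2) →
      ∑ p ∈ M, w p.1 p.2 ≤ min (R.card : ℝ) (S.card : ℝ) :=
    fun M => sum_matching_le_min fun r hr s hs => (hw r hr s hs).2
  have hWle : W ≤ min (R.card : ℝ) (S.card : ℝ) := by
    obtain ⟨M, hM, hmatch, rfl⟩ := hW.1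
    exact hmatching M hM hmatch
  have hsim := div_add_sub_le_min_div_max R.card.cast_nonneg S.card.cast_nonneg hWle
  refine ⟨hmatching, hsim, fun δ hδ _ hle => ?_⟩
  have hmul : δ * max (R.card : ℝ) (S.card : ℝ) ≤ min (R.card : ℝ) (S.card : ℝ) :=
    mul_le_of_le_div₀ (by positivity) (by positivity) (hle.trans hsim)
  constructor
  · exact (mul_le_mul_of_nonneg_left (le_max_left _ _) hδ.le).trans
      (hmul.trans (min_le_right _ _))
  · rw [le_div_iff₀' hδ]
    exact (mul_le_mul_of_nonneg_left (le_max_right _ _) hδ.le).trans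
      (hmul.trans (min_le_left _ _))
end

section
/- For finite sets A, B, C (over any type with decidable equality), the Jaccard distance d(A,B) = 1 − |A ∩ B| / |A ∪ B| (with the convention d(A,B) = 0 when both sets are empty) satisfies the triangle inequality: d(A,C) ≤ d(A,B) + d(B,C). Equivalently, the complement of the Jaccard similarity JAC(A,B) = |A ∩ B|/|A ∪ B| is a distance function on finite sets. -/
open Finset

/-- The Jaccard distance `1 - |A ∩ B| / |A ∪ B|` between finite sets, with the
convention that the distance is `0` when both sets are empty. -/
noncomputable def jaccardDist {α : Type*} [DecidableEq α] (A B : Finset α) : ℝ :=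
  if A = ∅ ∧ B = ∅ then 0
  else 1 - ((A ∩ B).card : ℝ) / ((A ∪ B).card : ℝ)

/-- The Jaccard distance in the division-by-zero convention of Lean. -/
theorem jaccardDist_eq_div {α : Type*} [DecidableEq α] (A B : Finset α) :
    jaccardDist A B = (((A ∪ B).card : ℝ) - (A ∩ B).card) / (A ∪ B).card := by
  unfold jaccardDist
  split_ifs with h
  · simp [h.1, h.2]
  · have hpos : 0 < (A ∪ B).card := by
      rw [card_pos, nonempty_iff_ne_empty, Ne, union_eq_empty]
      exact h
    rw [sub_div, div_self (by positivity)]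

/-- Enlarging the denominator to the size of a superset can only lower the Jaccard distance. -/
theorem div_card_le_jaccardDist {α : Type*} [DecidableEq α] {A B U : Finset α}
    (h : A ∪ B ⊆ U) :
    (((A ∪ B).card : ℝ) - (A ∩ B).card) / U.card ≤ jaccardDist A B := by
  have hi : ((A ∩ B).card : ℝ) ≤ (A ∪ B).card := by
    exact_mod_cast card_le_card inter_subset_union
  have hU : ((A ∪ B).card : ℝ) ≤ U.card := by exact_mod_cast card_le_card h
  rw [jaccardDist_eq_div]
  rcases (A ∪ B).card.eq_zero_or_pos with h0 | h0
  · have hi0 : ((A ∩ B).card : ℝ) = 0 := le_antisymm (by simpa [h0] using hi) (by positivity)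
    simp [h0, hi0]
  · exact div_le_div_of_nonneg_left (by linarith) (by positivity) hU

theorem card_union_add_card_inter_le {α : Type*} [DecidableEq α] (A B C : Finset α) :
    (A ∪ B ∪ C).card + (A ∩ B).card + (B ∩ C).card ≤
      (A ∪ B).card + (B ∪ C).card + (A ∩ C).card := by
  have hunion := card_union_add_card_inter (A ∪ B) (B ∪ C)
  have hinter := card_union_add_card_inter (A ∩ B) (B ∩ C)
  have hU : (A ∪ B) ∪ (B ∪ C) = A ∪ B ∪ C := by grind
  have hB : (A ∩ B ∪ B ∩ C).card ≤ ((A ∪ B) ∩ (B ∪ C)).card := card_le_card (by grind)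
  have hAC : (A ∩ B ∩ (B ∩ C)).card ≤ (A ∩ C).card := card_le_card (by grind)
  rw [hU] at hunion
  omega

/-- **Triangle inequality for the Jaccard distance.**
For finite sets `A`, `B`, `C`, the Jaccard distance `d(A,B) = 1 - |A ∩ B|/|A ∪ B|`
(the complement of the Jaccard similarity) satisfies `d(A,C) ≤ d(A,B) + d(B,C)`. -/
theorem jaccardDist_triangle {α : Type*} [DecidableEq α] (A B C : Finset α) :
    jaccardDist A C ≤ jaccardDist A B + jaccardDist B C := by
  have hAB := div_card_le_jaccardDist (A := A) (B := B) (U := A ∪ B ∪ C) (by grind)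
  have hBC := div_card_le_jaccardDist (A := B) (B := C) (U := A ∪ B ∪ C) (by grind)
  have hcard : ((A ∪ B ∪ C).card : ℝ) + (A ∩ B).card + (B ∩ C).card ≤
      (A ∪ B).card + (B ∪ C).card + (A ∩ C).card := by
    exact_mod_cast card_union_add_card_inter_le A B C
  have hAC : jaccardDist A C ≤
      (((A ∪ B ∪ C).card : ℝ) - (A ∩ C).card) / (A ∪ B ∪ C).card := by
    have hi : ((A ∩ C).card : ℝ) ≤ (A ∪ B ∪ C).card := by
      exact_mod_cast card_le_card (by grind)
    have hU : ((A ∪ C).card : ℝ) ≤ (A ∪ B ∪ C).card := by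
      exact_mod_cast card_le_card (by grind)
    rw [jaccardDist_eq_div]
    rcases (A ∪ C).card.eq_zero_or_pos with h0 | h0
    · rw [h0, Nat.cast_zero, div_zero]
      exact div_nonneg (by linarith) (by positivity)
    · have hq : (0 : ℝ) < (A ∪ C).card := by exact_mod_cast h0
      rw [div_le_div_iff₀ hq (hq.trans_le hU)]
      nlinarith [mul_le_mul_of_nonneg_left hU (Nat.cast_nonneg (α := ℝ) (A ∩ C).card)]
  calc jaccardDist A C
      ≤ (((A ∪ B ∪ C).card : ℝ) - (A ∩ C).card) / (A ∪ B ∪ C).card := hAC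
    _ ≤ ((((A ∪ B).card : ℝ) - (A ∩ B).card) + ((B ∪ C).card - (B ∩ C).card)) /
          (A ∪ B ∪ C).card := by
        gcongr
        linarith
    _ ≤ jaccardDist A B + jaccardDist B C := by
        rw [add_div]
        exact add_le_add hAB hBC
end

section
/- Let X be a finite type and φ : X → X → ℝ an element similarity measure with 0 ≤ φ(x,y) ≤ 1 for all x, y, φ(x,x) = 1 for all x, and such that ψ(x,y) = 1 − φ(x,y) satisfies the triangle inequality ψ(x,z) ≤ ψ(x,y) + ψ(y,z) for all x, y, z. Let R, S be finite subsets of X. Then there exists a maximum weight matching M between R and S (in the complete bipartite graph with edge weights φ) that matches every common element to itself: for each x ∈ R ∩ S, the pair (x, x) belongs to M. Hence the duplicate elements of R and S may be removed before matching and their count ov = |R ∩ S| added back to the matching weight without changing the optimum. -/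
open Finset

/-- A set of pairs is a matching between `R` and `S` if its pairs lie in `R × S` and distinct
pairs differ in both coordinates. -/
def IsMatchingBetween {X : Type*} (R S : Finset X) (M : Finset (X × X)) : Prop :=
  M ⊆ R ×ˢ S ∧ ∀ p ∈ M, ∀ q ∈ M, p ≠ q → p.1 ≠ q.1 ∧ p.2 ≠ q.2

/-- A matching can be modified to contain `(x, x)` for a common element `x`, without losing weight
or any diagonal pair. -/
theorem IsMatchingBetween.exists_mem_diag {X : Type*} [DecidableEq X] {φ : X → X → ℝ}
    (h01 : ∀ x y : X, 0 ≤ φ x y ∧ φ x y ≤ 1) (hrefl : ∀ x : X, φ x x = 1)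
    (htri : ∀ x y z : X, 1 - φ x z ≤ (1 - φ x y) + (1 - φ y z))
    {R S : Finset X} {M : Finset (X × X)} (hM : IsMatchingBetween R S M)
    {x : X} (hxR : x ∈ R) (hxS : x ∈ S) :
    ∃ N, IsMatchingBetween R S N ∧ ∑ p ∈ M, φ p.1 p.2 ≤ ∑ p ∈ N, φ p.1 p.2 ∧
      (x, x) ∈ N ∧ ∀ y, (y, y) ∈ M → (y, y) ∈ N := by
  by_cases hx : (x, x) ∈ M
  · exact ⟨M, hM, le_rfl, hx, fun _ h => h⟩
  obtain ⟨hsub, hinj⟩ := hM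
  have hmem : ∀ a b, (a, b) ∈ M → a ∈ R ∧ b ∈ S := fun a b h => mem_product.1 (hsub h)
  by_cases hl : ∃ a, (a, x) ∈ M <;> by_cases hr : ∃ b, (x, b) ∈ M
  · obtain ⟨a, ha⟩ := hl
    obtain ⟨b, hb⟩ := hr
    have hax : a ≠ x := by grind
    have hb' : (x, b) ∈ M.erase (a, x) := by grind
    have hab : (a, b) ∉ (M.erase (a, x)).erase (x, b) := by grind
    have hxx : (x, x) ∉ insert (a, b) ((M.erase (a, x)).erase (x, b)) := by grind
    refine ⟨insert (x, x) (insert (a, b) ((M.erase (a, x)).erase (x, b))), ⟨?_, ?_⟩, ?_, ?_, ?_⟩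
    · rintro ⟨c, d⟩ h
      grind
    · rintro ⟨c, d⟩ h ⟨e, f⟩ h'
      grind
    · rw [sum_insert hxx, sum_insert hab, ← add_sum_erase M _ ha, ← add_sum_erase _ _ hb', hrefl]
      linarith [htri a x b]
    · grind
    · grind
  · obtain ⟨a, ha⟩ := hl
    have hxx : (x, x) ∉ M.erase (a, x) := by grind
    refine ⟨insert (x, x) (M.erase (a, x)), ⟨?_, ?_⟩, ?_, ?_, ?_⟩
    · rintro ⟨c, d⟩ h
      grind
    · rintro ⟨c, d⟩ h ⟨e, f⟩ h'
      grind
    · rw [sum_insert hxx, ← add_sum_erase M _ ha, hrefl]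
      linarith [(h01 a x).2]
    · grind
    · grind
  · obtain ⟨b, hb⟩ := hr
    have hxx : (x, x) ∉ M.erase (x, b) := by grind
    refine ⟨insert (x, x) (M.erase (x, b)), ⟨?_, ?_⟩, ?_, ?_, ?_⟩
    · rintro ⟨c, d⟩ h
      grind
    · rintro ⟨c, d⟩ h ⟨e, f⟩ h'
      grind
    · rw [sum_insert hxx, ← add_sum_erase M _ hb, hrefl]
      linarith [(h01 x b).2]
    · grind
    · grind
  · refine ⟨insert (x, x) M, ⟨?_, ?_⟩, ?_, ?_, ?_⟩
    · rintro ⟨c, d⟩ h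
      grind
    · rintro ⟨c, d⟩ h ⟨e, f⟩ h'
      grind
    · rw [sum_insert hx, hrefl]
      linarith
    · grind
    · grind

/-- A matching can be modified to contain `(x, x)` for every `x` in a set of common elements,
without losing weight. -/
theorem IsMatchingBetween.exists_forall_mem_diag {X : Type*} [DecidableEq X] {φ : X → X → ℝ}
    (h01 : ∀ x y : X, 0 ≤ φ x y ∧ φ x y ≤ 1) (hrefl : ∀ x : X, φ x x = 1)
    (htri : ∀ x y z : X, 1 - φ x z ≤ (1 - φ x y) + (1 - φ y z))
    {R S : Finset X} {M : Finset (X × X)} (hM : IsMatchingBetween R S M)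
    (T : Finset X) (hT : T ⊆ R ∩ S) :
    ∃ N, IsMatchingBetween R S N ∧ ∑ p ∈ M, φ p.1 p.2 ≤ ∑ p ∈ N, φ p.1 p.2 ∧
      ∀ x ∈ T, (x, x) ∈ N := by
  induction T using Finset.induction_on with
  | empty => exact ⟨M, hM, le_rfl, by simp⟩
  | insert x T _ ih =>
    obtain ⟨hx, hT⟩ := insert_subset_iff.1 hT
    obtain ⟨N, hN, hle, hdiag⟩ := ih hT
    obtain ⟨hxR, hxS⟩ := mem_inter.1 hx
    obtain ⟨N', hN', hle', hxN', hkeep⟩ := hN.exists_mem_diag h01 hrefl htri hxR hxS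
    exact ⟨N', hN', hle.trans hle',
      forall_mem_insert .. |>.2 ⟨hxN', fun y hy => hkeep y (hdiag y hy)⟩⟩

/-- **Deduplication is safe for matching-based similarity.**
If the element similarity `φ` takes values in `[0,1]`, satisfies `φ x x = 1`, and its
complement `ψ = 1 - φ` satisfies the triangle inequality, then there exists a maximum
weight matching between `R` and `S` (in the complete bipartite graph with edge weights
`φ`) that matches every common element of `R` and `S` to itself. -/
theorem exists_max_matching_fixing_duplicates
    {X : Type*} [Fintype X] [DecidableEq X]
    (φ : X → X → ℝ)
    (h01 : ∀ x y : X, 0 ≤ φ x y ∧ φ x y ≤ 1)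
    (hrefl : ∀ x : X, φ x x = 1)
    (htri : ∀ x y z : X, 1 - φ x z ≤ (1 - φ x y) + (1 - φ y z))
    (R S : Finset X) :
    ∃ M : Finset (X × X), M ⊆ R ×ˢ S ∧
      (∀ p ∈ M, ∀ q ∈ M, p ≠ q → p.1 ≠ q.1 ∧ p.2 ≠ q.2) ∧
      (∀ M' : Finset (X × X), M' ⊆ R ×ˢ S →
        (∀ p ∈ M', ∀ q ∈ M', p ≠ q → p.1 ≠ q.1 ∧ p.2 ≠ q.2) →
        ∑ p ∈ M', φ p.1 p.2 ≤ ∑ p ∈ M, φ p.1 p.2) ∧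
      (∀ x ∈ R ∩ S, (x, x) ∈ M) := by
  classical
  obtain ⟨M, hM, hmax⟩ := exists_max_image
    ((R ×ˢ S).powerset.filter (IsMatchingBetween R S)) (fun M => ∑ p ∈ M, φ p.1 p.2)
    ⟨∅, by simp [IsMatchingBetween]⟩
  obtain ⟨N, hN, hle, hdiag⟩ :=
    (mem_filter.1 hM).2.exists_forall_mem_diag h01 hrefl htri (R ∩ S) subset_rfl
  exact ⟨N, hN.1, hN.2, fun M' hsub hinj =>
    (hmax M' (mem_filter.2 ⟨mem_powerset.2 hsub, hsub, hinj⟩)).trans hle, hdiag⟩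
end
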